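/- arXiv:1508.03035 — 3 statements merged into one kernel-verified Lean document; each statement's English description precedes it below -/
import Mathlib

section
/- d'Ocagne's identity for the Generalized k-Pell sequence: for all positive integers k and a and all natural numbers m, n with m > n, G_{k,m} G_{k,n+1} - G_{k,m+1} G_{k,n} = a (-1)^n k^n √(1+k) ( G_{k,m-n} - a (1+√(1+k))^{m-n} ). -/
/-!
The characteristic roots of the recurrence are `r₁ = 1 + s` and `r₂ = 1 - s` with `s = √(1 + k)`,
and the initial values give the Binet formula `G n = a / 2 * (r₁ ^ n + r₂ ^ n)`. Writing
`m = n + d` and using `r₁ * r₂ = -k`, the left side collapses to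
`a ^ 2 / 2 * (-k) ^ n * s * (r₂ ^ d - r₁ ^ d)`, and `a / 2 * (r₂ ^ d - r₁ ^ d) = G d - a * r₁ ^ d`.
-/

/-- The Generalized k-Pell sequence. -/
def genPell (k a : ℕ) : ℕ → ℝ
  | 0 => a
  | 1 => a
  | n + 2 => 2 * genPell k a (n + 1) + k * genPell k a n

/-- Binet formula, for any square root `s` of `1 + k`. -/
theorem genPell_binet (k a : ℕ) (s : ℝ) (hs : s ^ 2 = 1 + k) (n : ℕ) :
    genPell k a n = (a : ℝ) / 2 * ((1 + s) ^ n + (1 - s) ^ n) := by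
  induction n using Nat.twoStepInduction with
  | zero => simp only [genPell]; ring
  | one => simp only [genPell]; ring
  | more n ih1 ih2 =>
    have hk : (k : ℝ) = s ^ 2 - 1 := by linarith
    simp only [genPell, ih1, ih2, hk]
    ring

/-- d'Ocagne's identity for the Generalized k-Pell sequence. -/
theorem genPell_dOcagne (k a : ℕ) (hk : 0 < k) (ha : 0 < a) (m n : ℕ) (hmn : n < m) :
    genPell k a m * genPell k a (n + 1) - genPell k a (m + 1) * genPell k a n =
      (a : ℝ) * (-1 : ℝ) ^ n * (k : ℝ) ^ n * Real.sqrt (1 + k) *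
        (genPell k a (m - n) - (a : ℝ) * (1 + Real.sqrt (1 + k)) ^ (m - n)) := by
  obtain ⟨d, rfl⟩ := Nat.exists_eq_add_of_le hmn.le
  have hs : Real.sqrt (1 + k) ^ 2 = 1 + (k : ℝ) := Real.sq_sqrt (by positivity)
  generalize Real.sqrt (1 + k) = s at hs ⊢
  have hp : (-1 : ℝ) ^ n * (k : ℝ) ^ n = (1 + s) ^ n * (1 - s) ^ n := by
    rw [← mul_pow, ← mul_pow]
    congr 1
    linarith
  rw [Nat.add_sub_cancel_left, mul_assoc (a : ℝ), hp]
  simp only [genPell_binet k a s hs, pow_add, pow_one]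
  -- With the powers as atoms, the identity is polynomial in them and in `s`.
  generalize (1 + s) ^ n = x
  generalize (1 - s) ^ n = y
  generalize (1 + s) ^ d = u
  generalize (1 - s) ^ d = v
  ring
end

section
/- For every positive integer k and every integer n ≥ 1, the k-Pell sequence satisfies P_{k,n+1}^2 - k^2 · P_{k,n-1}^2 = 2 · P_{k,2n}. -/
/-!
Factor the left-hand side as a difference of squares. With `n = m + 1`, the recurrence gives
`P (m + 2) - k * P m = 2 * P (m + 1)`, while the addition formula `kPell_add` gives
`P (m + 1) * (P (m + 2) + k * P m) = P (2 * (m + 1))`.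
-/

/-- The k-Pell sequence. -/
def kPell (k : ℕ) : ℕ → ℝ
  | 0 => 0
  | 1 => 1
  | n + 2 => 2 * kPell k (n + 1) + k * kPell k n

/-- Addition formula for the k-Pell sequence, by induction on `n` with `m` varying: one step of
the recurrence moves a unit from `n` to `m`. -/
theorem kPell_add (k : ℕ) (n : ℕ) : ∀ m : ℕ,
    kPell k (m + n + 1) = kPell k (m + 1) * kPell k (n + 1) + k * kPell k m * kPell k n := by
  induction n with
  | zero => intro m; simp [kPell]
  | succ n ih =>
    intro m
    have h := ih (m + 1)
    rw [show m + 1 + n + 1 = m + (n + 1) + 1 by ring] at h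
    rw [h]
    simp only [kPell]
    ring

/-- P_{k,n+1}² - k² P_{k,n-1}² = 2 P_{k,2n}. -/
theorem kPell_sq_sub (k : ℕ) (hk : 0 < k) (n : ℕ) (hn : 1 ≤ n) :
    kPell k (n + 1) ^ 2 - (k : ℝ) ^ 2 * kPell k (n - 1) ^ 2 = 2 * kPell k (2 * n) := by
  obtain ⟨m, rfl⟩ := Nat.exists_eq_add_of_le' hn
  have h := kPell_add k m (m + 1)
  rw [show m + 1 + m + 1 = 2 * (m + 1) by ring] at h
  rw [h, Nat.add_sub_cancel]
  simp only [kPell]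
  ring
end

section
/- For all positive integers k, a, and n, the matrix G_n(k) (over the rationals or reals) is invertible, and its inverse has entries (indexing rows and columns from 1 to n): [(G_n(k))^{-1}]_{i,j} = (-1)^{1+j} · a · k^{j-1} · P_{k,n-j+1} / G_{k,n+1} when 1 = i < j; [(G_n(k))^{-1}]_{i,j} = (-1)^{i+j} · k^{j-i} · G_{k,i} · P_{k,n-j+1} / G_{k,n+1} when 1 < i ≤ j; [(G_n(k))^{-1}]_{i,j} = P_{k,n-i+1} / G_{k,n+1} when i ≥ j = 1; and [(G_n(k))^{-1}]_{i,j} = G_{k,j} · P_{k,n-i+1} / G_{k,n+1} when i > j > 1. -/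
/-- The n×n tridiagonal generating matrix G_n(k) for the Generalized k-Pell sequence. -/
def genPellMatrix (k a n : ℕ) : Matrix (Fin n) (Fin n) ℝ :=
  Matrix.of fun i j =>
    if (i : ℕ) = 0 ∧ (j : ℕ) = 0 then (a : ℝ) * k + 2 * a
    else if (i : ℕ) = 0 ∧ (j : ℕ) = 1 then (a : ℝ) * k
    else if (i : ℕ) = (j : ℕ) then 2
    else if (j : ℕ) = (i : ℕ) + 1 then (k : ℝ)
    else if (i : ℕ) = (j : ℕ) + 1 then -1
    else 0

theorem genPell_pos (k a : ℕ) (ha : 0 < a) (n : ℕ) : 0 < genPell k a n := by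
  have ha' : (0 : ℝ) < a := by exact_mod_cast ha
  induction n using Nat.twoStepInduction with
  | zero => simpa [genPell] using ha'
  | one => simpa [genPell] using ha'
  | more n h0 h1 =>
    rw [genPell]
    positivity

theorem genPell_add (k a r m : ℕ) :
    genPell k a (m + 1) * kPell k (r + 1) + k * genPell k a m * kPell k r =
      genPell k a (m + r + 1) := by
  induction r generalizing m with
  | zero => simp [kPell]
  | succ r ih =>
    have h := ih (m + 1)
    rw [show m + 1 + r + 1 = m + (r + 1) + 1 by ring] at h
    rw [← h, kPell, genPell]
    ring

/-- Row `i` of the matrix applied to a column `f`. The condition `f n = 0` makes the formula valid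
in the last row too, where there is no superdiagonal entry. -/
theorem sum_genPellMatrix (k a n : ℕ) (f : ℕ → ℝ) (hf : f n = 0) (i : Fin n) :
    ∑ j : Fin n, genPellMatrix k a n i j * f j =
      if (i : ℕ) = 0 then ((a : ℝ) * k + 2 * a) * f 0 + a * k * f 1
      else -f (i - 1) + 2 * f i + k * f (i + 1) := by
  obtain ⟨i, hi⟩ := i
  dsimp only
  -- The sum is extended to `range (n + 1)`, so that the index `i + 1` always lies in the range.
  have key : ∑ j : Fin n, genPellMatrix k a n ⟨i, hi⟩ j * f j =
      ∑ j ∈ Finset.range (n + 1),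
        (if i = 0 then ((if j = 0 then ((a : ℝ) * k + 2 * a) * f j else 0) +
            (if j = 1 then a * k * f j else 0))
          else ((if j = i - 1 then -f j else 0) + (if j = i then 2 * f j else 0) +
            (if j = i + 1 then k * f j else 0))) := by
    rw [Finset.sum_range_succ, hf, ← Fin.sum_univ_eq_sum_range]
    simp only [mul_zero, neg_zero, ite_self, add_zero]
    refine Finset.sum_congr rfl fun j _ => ?_
    simp only [genPellMatrix, Matrix.of_apply]
    generalize (j : ℕ) = j
    split_ifs <;> first | omega | ring
  rw [key]
  split_ifs with h0
  · rw [Finset.sum_add_distrib, Finset.sum_ite_eq', Finset.sum_ite_eq', if_pos (by simp),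
      if_pos (by simp; omega)]
  · rw [Finset.sum_add_distrib, Finset.sum_add_distrib, Finset.sum_ite_eq', Finset.sum_ite_eq',
      Finset.sum_ite_eq', if_pos (by simp; omega), if_pos (by simp; omega),
      if_pos (by simp; omega)]

/-- The entries of `G_{k,n+1}` times the inverse matrix, with indices from `0` and rows extended to
all of `ℕ`. Only column `0` needs a separate case: since `G_{k,1} = a`, the factor `a` of the first
row is `G_{k,i+1}` at `i = 0`. -/
def invEntry (k a n i j : ℕ) : ℝ :=
  if j = 0 then kPell k (n - i)
  else if i ≤ j then (-1) ^ (i + j) * k ^ (j - i) * genPell k a (i + 1) * kPell k (n - j)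
  else genPell k a (j + 1) * kPell k (n - i)

theorem kPell_rec (k : ℕ) {n i : ℕ} (h0 : i ≠ 0) (hi : i < n) :
    kPell k (n - (i - 1)) = 2 * kPell k (n - i) + k * kPell k (n - (i + 1)) := by
  obtain ⟨r, rfl⟩ := Nat.exists_eq_add_of_lt hi
  rw [show i + r + 1 - (i - 1) = r + 2 by omega, show i + r + 1 - i = r + 1 by omega,
    show i + r + 1 - (i + 1) = r by omega, kPell]

theorem genPellMatrix_mul (k a n : ℕ) :
    genPellMatrix k a n * Matrix.of (fun i j : Fin n => invEntry k a n i j) =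
      genPell k a (n + 1) • (1 : Matrix (Fin n) (Fin n) ℝ) := by
  ext i j
  have hlast : invEntry k a n n j = 0 := by
    have := j.2
    simp [invEntry, kPell, this]
  rw [Matrix.mul_apply]
  simp only [Matrix.of_apply, Matrix.smul_apply, Matrix.one_apply, smul_eq_mul, Fin.ext_iff]
  rw [sum_genPellMatrix k a n (fun i => invEntry k a n i j) hlast i]
  obtain ⟨i, hi⟩ := i
  obtain ⟨j, hj⟩ := j
  dsimp only
  rcases Nat.eq_zero_or_pos j with rfl | hj0
  · by_cases h0 : i = 0
    · subst h0
      obtain ⟨r, rfl⟩ := Nat.exists_eq_add_of_lt hi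
      have h := genPell_add k a r 1
      rw [show 1 + r + 1 = 0 + r + 1 + 1 by ring] at h
      rw [← h]
      simp only [invEntry, if_true, genPell, zero_add, Nat.sub_zero, Nat.add_sub_cancel]
      ring
    · simp only [invEntry, if_true, if_neg h0, kPell_rec k h0 hi]
      ring
  · have hj1 : j ≠ 0 := by omega
    by_cases h0 : i = 0
    · subst h0
      obtain ⟨s, rfl⟩ := Nat.exists_eq_add_of_lt hj0
      simp only [invEntry, if_true, if_neg hj1, if_neg hj1.symm, if_pos (Nat.zero_le (0 + s + 1)),
        if_pos (show 1 ≤ 0 + s + 1 by omega)]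
      simp only [genPell, zero_add, Nat.sub_zero, Nat.add_sub_cancel]
      ring
    · obtain ⟨t, rfl⟩ := Nat.exists_eq_succ_of_ne_zero h0
      rcases lt_trichotomy (t + 1) j with h | rfl | h
      · obtain ⟨s, rfl⟩ := Nat.exists_eq_add_of_lt h
        simp only [invEntry, Nat.succ_eq_add_one, if_neg hj1, if_neg h0, if_neg h.ne,
          Nat.add_sub_cancel,
          if_pos (show t ≤ t + 1 + s + 1 by omega), if_pos (show t + 1 ≤ t + 1 + s + 1 by omega),
          if_pos (show t + 1 + 1 ≤ t + 1 + s + 1 by omega),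
          show t + 1 + s + 1 - t = s + 2 by omega, show t + 1 + s + 1 - (t + 1) = s + 1 by omega,
          show t + 1 + s + 1 - (t + 1 + 1) = s by omega, genPell]
        ring
      · obtain ⟨r, rfl⟩ := Nat.exists_eq_add_of_lt hi
        have h := genPell_add k a r (t + 2)
        rw [show t + 2 + r + 1 = t + 1 + r + 1 + 1 by ring] at h
        have hs : ((-1 : ℝ) ^ (t + 1 + (t + 1))) = 1 := Even.neg_one_pow ⟨t + 1, rfl⟩
        have hs' : ((-1 : ℝ) ^ (t + (t + 1))) = -1 := Odd.neg_one_pow ⟨t, by ring⟩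
        simp only [invEntry, Nat.succ_eq_add_one, if_neg h0, if_true, Nat.add_sub_cancel, hs, hs',
          le_refl, if_pos (show t ≤ t + 1 by omega), if_neg (show ¬ t + 1 + 1 ≤ t + 1 by omega),
          show t + 1 - t = 1 by omega, Nat.sub_self,
          show t + 1 + r + 1 - (t + 1) = r + 1 by omega,
          show t + 1 + r + 1 - (t + 1 + 1) = r by omega, ← h]
        rw [show genPell k a (t + 2 + 1) =
          2 * genPell k a (t + 2) + k * genPell k a (t + 1) from rfl]
        ring
      -- Here `t ≥ j`; at `t = j` the branch `i ≤ j` of `invEntry` agrees with the other one.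
      · have hb : invEntry k a n t j = genPell k a (j + 1) * kPell k (n - t) := by
          rcases (show j ≤ t by omega).eq_or_lt with rfl | h'
          · simp [invEntry, hj1, Even.neg_one_pow ⟨j, rfl⟩]
          · simp [invEntry, hj1, h']
        have hrec := kPell_rec k h0 hi
        simp only [Nat.succ_eq_add_one, Nat.add_sub_cancel] at hrec ⊢
        rw [if_neg h0, hb, hrec]
        simp only [invEntry, if_neg hj1, if_neg (show ¬ t + 1 ≤ j by omega),
          if_neg (show ¬ t + 1 + 1 ≤ j by omega), if_neg h.ne']
        ring

/-- G_n(k) is invertible and the entries of its inverse are given by Usmani's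
    formula, in terms of Generalized k-Pell and k-Pell numbers.  Rows and columns
    are indexed 1,…,n, so the index pair (i,j) of the paper corresponds to the
    pair (i+1, j+1) of `Fin n` indices i, j. -/
theorem genPellMatrix_inv (k a n : ℕ) (hk : 0 < k) (ha : 0 < a) (hn : 0 < n) :
    IsUnit (genPellMatrix k a n) ∧
      (∀ i j : Fin n, (i : ℕ) + 1 = 1 → 1 < (j : ℕ) + 1 →
        (genPellMatrix k a n)⁻¹ i j =
          (-1 : ℝ) ^ (1 + ((j : ℕ) + 1)) * (a : ℝ) * (k : ℝ) ^ (((j : ℕ) + 1) - 1) *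
            kPell k (n - ((j : ℕ) + 1) + 1) / genPell k a (n + 1)) ∧
      (∀ i j : Fin n, 1 < (i : ℕ) + 1 → (i : ℕ) + 1 ≤ (j : ℕ) + 1 →
        (genPellMatrix k a n)⁻¹ i j =
          (-1 : ℝ) ^ (((i : ℕ) + 1) + ((j : ℕ) + 1)) *
            (k : ℝ) ^ (((j : ℕ) + 1) - ((i : ℕ) + 1)) * genPell k a ((i : ℕ) + 1) *
            kPell k (n - ((j : ℕ) + 1) + 1) / genPell k a (n + 1)) ∧
      (∀ i j : Fin n, (j : ℕ) + 1 = 1 → (j : ℕ) + 1 ≤ (i : ℕ) + 1 →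
        (genPellMatrix k a n)⁻¹ i j =
          kPell k (n - ((i : ℕ) + 1) + 1) / genPell k a (n + 1)) ∧
      (∀ i j : Fin n, 1 < (j : ℕ) + 1 → (j : ℕ) + 1 < (i : ℕ) + 1 →
        (genPellMatrix k a n)⁻¹ i j =
          genPell k a ((j : ℕ) + 1) * kPell k (n - ((i : ℕ) + 1) + 1) /
            genPell k a (n + 1)) := by
  have hD : genPell k a (n + 1) ≠ 0 := (genPell_pos k a ha (n + 1)).ne'
  have hmul : genPellMatrix k a n *
      ((genPell k a (n + 1))⁻¹ • Matrix.of (fun i j : Fin n => invEntry k a n i j)) = 1 := by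
    rw [Matrix.mul_smul, genPellMatrix_mul, smul_smul, inv_mul_cancel₀ hD, one_smul]
  have hinv : ∀ i j : Fin n, (genPellMatrix k a n)⁻¹ i j =
      invEntry k a n i j / genPell k a (n + 1) := fun i j => by
    rw [Matrix.inv_eq_right_inv hmul, Matrix.smul_apply, Matrix.of_apply, smul_eq_mul]
    ring
  have hsub : ∀ i : Fin n, n - ((i : ℕ) + 1) + 1 = n - i := fun i => by omega
  refine ⟨(Matrix.isUnit_iff_isUnit_det _).2 (Matrix.isUnit_det_of_right_inverse hmul), ?_, ?_, ?_,
    ?_⟩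
  · intro i j hi hj
    have hi0 : (i : ℕ) = 0 := by omega
    rw [hinv, hsub, invEntry, if_neg (by omega), if_pos (by omega), hi0]
    simp only [genPell, zero_add, Nat.sub_zero, Nat.add_sub_cancel]
    ring
  · intro i j hi hj
    rw [hinv, hsub, invEntry, if_neg (by omega), if_pos (by omega), Nat.add_sub_add_right]
    ring
  · intro i j hj _
    rw [hinv, hsub, invEntry, if_pos (by omega)]
  · intro i j hj hi
    rw [hinv, hsub, invEntry, if_neg (by omega), if_neg (by omega)]
end
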